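/- There exists an absolute constant c > 0 with the following property. Let b_1, ..., b_k be distinct integers, a ∈ ℕ, s ∈ ℕ, k ≥ 2, x ≥ 3 real, (log x)^{−9/10} ≤ η ≤ 1, and |b_i| ≤ log x for all 1 ≤ i ≤ k. Set f(b) = (b − b_1)···(b − b_k). If k ≥ log log x or s ≤ k, then Σ_{|b| ≤ η log x, b ≠ b_1, ..., b_k} (a^{k+1}|f(b)| / φ(a^{k+1}|f(b)|))^s ≤ (c · (a/φ(a)) · log k)^s · η·log x, where b runs over integers. -/

import Mathlib

/-!
Write `n / φ(n) = ∏_{p ∣ n} (1 - 1/p)⁻¹`. By Mertens' upper bound, obtained by comparing the Euler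
factors at `1` and at `1 + 1 / log y`, the primes `p ≤ y` contribute `O(log y)`. Since `n` has
at most `log n / log 2` prime factors, those exceeding `z ≥ log n` contribute `O(1)`.

Here `n = |f(m)|` with `log n ≤ k ℓ`, where `ℓ` is about `log log x`. If `ℓ ≤ k⁴`, taking
`y = z = k⁵` bounds every single term by `(O(log k))^s`. If `ℓ > k⁴`, then `s ≤ k`, and
we take `y = k` and `z = k ℓ`. A prime `p > k` dividing `f(m)` contributes at most `1 + 4s/p`
to the `s`-th power. Expanding the product over `k < p ≤ z`, and using that a squarefree `d`
divides `f(m)` for `m` in at most `k^ω(d)` classes modulo `d`, its sum over an interval of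
length `H` is at most `H ∏ (1 + 4ks/p²) + ∏ (1 + 4ks/p)`. The first product is at most `e^{8s}`, and
the second is at most `exp (4ks (1 + log z)) = exp (o(ℓ))`, which is smaller than any fixed power
of `log x` and so is absorbed by `H`.
-/

open Finset Real
open scoped ArithmeticFunction.vonMangoldt

theorem sum_vonMangoldt_div_le_two_mul_log (n : ℕ) :
    ∑ d ∈ Ioc 0 n, Λ d / d ≤ 2 * log n := by
  rcases n.eq_zero_or_pos with rfl | hn
  · simp
  have hlog_factorial : ∑ d ∈ Ioc 0 n, Λ d * (n / d : ℕ) ≤ n * log n := by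
    rw [← ArithmeticFunction.sum_Ioc_mul_zeta_eq_sum,
      ArithmeticFunction.vonMangoldt_mul_zeta]
    calc ∑ m ∈ Ioc 0 n, ArithmeticFunction.log m ≤ ∑ _m ∈ Ioc 0 n, log n := by
          refine sum_le_sum fun m hm ↦ ?_
          obtain ⟨hm0, hmn⟩ := mem_Ioc.1 hm
          rw [ArithmeticFunction.log_apply]
          gcongr
      _ = n * log n := by simp
  have hfloor : ∀ d ∈ Ioc 0 n, n * (Λ d / d) ≤ 2 * (Λ d * (n / d : ℕ)) := by
    intro d hd
    obtain ⟨hd0, hdn⟩ := mem_Ioc.1 hd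
    have hlt : n ≤ 2 * (n / d) * d := by
      have := Nat.lt_div_mul_add (a := n) hd0
      have := Nat.le_mul_of_pos_left d (Nat.div_pos hdn hd0)
      lia
    have hle : (n : ℝ) / d ≤ 2 * (n / d : ℕ) :=
      (div_le_iff₀ (by positivity)).2 (by exact_mod_cast hlt)
    calc n * (Λ d / d) = Λ d * (n / d) := by ring
      _ ≤ Λ d * (2 * (n / d : ℕ)) := by gcongr
      _ = 2 * (Λ d * (n / d : ℕ)) := by ring
  refine le_of_mul_le_mul_left ?_ (Nat.cast_pos.2 hn : (0 : ℝ) < n)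
  calc n * ∑ d ∈ Ioc 0 n, Λ d / d ≤ 2 * ∑ d ∈ Ioc 0 n, Λ d * (n / d : ℕ) := by
        rw [mul_sum, mul_sum]; exact sum_le_sum hfloor
    _ ≤ n * (2 * log n) := by linarith

theorem sum_log_div_primesLE_le_two_mul_log (n : ℕ) :
    ∑ p ∈ n.primesLE, log p / p ≤ 2 * log n := by
  refine le_trans ?_ (sum_vonMangoldt_div_le_two_mul_log n)
  rw [Nat.primesLE_eq_filter_Ioc_zero]
  calc ∑ p ∈ Ioc 0 n with p.Prime, log p / p = ∑ p ∈ Ioc 0 n with p.Prime, Λ p / p :=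
        sum_congr rfl fun p hp ↦ by
          rw [ArithmeticFunction.vonMangoldt_apply_prime (mem_filter.1 hp).2]
    _ ≤ ∑ d ∈ Ioc 0 n, Λ d / d := by
        refine sum_le_sum_of_subset_of_nonneg (filter_subset _ _) fun d _ _ ↦ ?_
        exact div_nonneg ArithmeticFunction.vonMangoldt_nonneg d.cast_nonneg

theorem tsum_inv_rpow_le {s : ℝ} (hs : 1 < s) :
    ∑' n : ℕ, ((n : ℝ) ^ s)⁻¹ ≤ 1 + 1 / (s - 1) := by
  have hterm : 0 ≤ ZetaAsymptotics.termTSum s :=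
    tsum_nonneg fun n ↦ ZetaAsymptotics.term_nonneg (n + 1) s
  have hshift : ∑' n : ℕ, ((n : ℝ) ^ s)⁻¹ = ∑' n : ℕ, 1 / ((n : ℝ) + 1) ^ s := by
    rw [(summable_nat_rpow_inv.2 hs).tsum_eq_zero_add]
    simp [zero_rpow (by linarith : s ≠ 0)]
  have := ZetaAsymptotics.zeta_limit_aux1 hs
  nlinarith

theorem prod_primesLE_one_sub_inv_rpow_inv_le {s : ℝ} (hs : 1 < s) (n : ℕ) :
    ∏ p ∈ n.primesLE, (1 - ((p : ℝ) ^ s)⁻¹)⁻¹ ≤ 1 + 1 / (s - 1) := by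
  let f : ℕ →* ℝ :=
    { toFun := fun i ↦ ((i : ℝ) ^ s)⁻¹
      map_one' := by simp
      map_mul' := fun i j ↦ by
        rw [Nat.cast_mul, mul_rpow i.cast_nonneg j.cast_nonneg, mul_inv] }
  have hf : Summable f := summable_nat_rpow_inv.2 hs
  calc ∏ p ∈ n.primesLE, (1 - f p)⁻¹ = ∑' m : (n + 1).smoothNumbers, f m :=
        EulerProduct.prod_primesBelow_geometric_eq_tsum_smoothNumbers hf (n + 1)
    _ ≤ ∑' m, f m := hf.tsum_subtype_le f _ fun m ↦ inv_nonneg.2 (by positivity)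
    _ ≤ 1 + 1 / (s - 1) := tsum_inv_rpow_le hs

/-- The factor at `p` in the Euler product for `n / φ(n)`. -/
noncomputable def eulerFactor (p : ℕ) : ℝ := (1 - (p : ℝ)⁻¹)⁻¹

theorem eulerFactor_eq_one_add {p : ℕ} (hp : 2 ≤ p) : eulerFactor p = 1 + 1 / ((p : ℝ) - 1) := by
  have hp' : (2 : ℝ) ≤ p := by exact_mod_cast hp
  have h₁ : (p : ℝ) - 1 ≠ 0 := by linarith
  have h₀ : (p : ℝ) ≠ 0 := by linarith
  rw [eulerFactor, show 1 - (p : ℝ)⁻¹ = (p - 1) / p by field_simp, inv_div]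
  field_simp
  ring

theorem one_le_eulerFactor {p : ℕ} (hp : 2 ≤ p) : 1 ≤ eulerFactor p := by
  have hp' : (2 : ℝ) ≤ p := by exact_mod_cast hp
  rw [eulerFactor_eq_one_add hp, le_add_iff_nonneg_right]
  exact div_nonneg zero_le_one (by linarith)

theorem eulerFactor_nonneg (p : ℕ) : 0 ≤ eulerFactor p :=
  inv_nonneg.2 (sub_nonneg.2 p.cast_inv_le_one)

theorem eulerFactor_le_mul_exp {p : ℕ} (hp : 2 ≤ p) {σ : ℝ} (hσ : 0 < σ) :
    eulerFactor p ≤ (1 - ((p : ℝ) ^ (1 + σ))⁻¹)⁻¹ * exp (2 * σ * (log p / p)) := by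
  have hp' : (2 : ℝ) ≤ p := by exact_mod_cast hp
  have hp0 : (0 : ℝ) < p := by linarith
  have hinv : (p : ℝ)⁻¹ ≤ 2⁻¹ := by gcongr
  set t := σ * (log p / p) with ht
  have ht0 : 0 ≤ t := by positivity
  have hsub : (p : ℝ)⁻¹ - t ≤ ((p : ℝ) ^ (1 + σ))⁻¹ := by
    calc (p : ℝ)⁻¹ - t = (p : ℝ)⁻¹ * (-(log p * σ) + 1) := by rw [ht]; ring
      _ ≤ (p : ℝ)⁻¹ * exp (-(log p * σ)) := by gcongr; exact add_one_le_exp _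
      _ = ((p : ℝ) ^ (1 + σ))⁻¹ := by
        rw [rpow_add hp0, rpow_one, rpow_def_of_pos hp0, mul_inv, exp_neg]
  have hlt : ((p : ℝ) ^ (1 + σ))⁻¹ < 1 :=
    inv_lt_one_of_one_lt₀ (one_lt_rpow (by linarith) (by linarith))
  rw [eulerFactor, inv_mul_eq_div, le_div_iff₀ (by linarith), inv_mul_le_iff₀ (by linarith)]
  calc 1 - ((p : ℝ) ^ (1 + σ))⁻¹ ≤ (1 - (p : ℝ)⁻¹) * (2 * t + 1) := by nlinarith
    _ ≤ (1 - (p : ℝ)⁻¹) * exp (2 * t) := by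
      gcongr
      · linarith
      · exact add_one_le_exp _
    _ = (1 - (p : ℝ)⁻¹) * exp (2 * σ * (log p / p)) := by rw [ht, mul_assoc]

theorem prod_primesLE_eulerFactor_le {n : ℕ} (hn : 2 ≤ n) :
    ∏ p ∈ n.primesLE, eulerFactor p ≤ 3 * exp 4 * log n := by
  have hlog : log 2 ≤ log n := by gcongr; exact_mod_cast hn
  have hlog0 : 1 / 2 < log n := by linarith [log_two_gt_d9]
  set σ := (log n)⁻¹ with hσ
  have hσ0 : 0 < σ := inv_pos.2 (by linarith)
  have hzeta : ∏ p ∈ n.primesLE, (1 - ((p : ℝ) ^ (1 + σ))⁻¹)⁻¹ ≤ 1 + log n := by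
    simpa [hσ] using prod_primesLE_one_sub_inv_rpow_inv_le (lt_add_of_pos_right 1 hσ0) n
  have hexp : 2 * σ * ∑ p ∈ n.primesLE, log p / p ≤ 4 := by
    calc 2 * σ * ∑ p ∈ n.primesLE, log p / p ≤ 2 * σ * (2 * log n) := by
          gcongr; exact sum_log_div_primesLE_le_two_mul_log n
      _ = 4 := by rw [hσ]; field_simp; norm_num
  calc ∏ p ∈ n.primesLE, eulerFactor p
      ≤ ∏ p ∈ n.primesLE,
          ((1 - ((p : ℝ) ^ (1 + σ))⁻¹)⁻¹ * exp (2 * σ * (log p / p))) :=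
        prod_le_prod (fun p _ ↦ eulerFactor_nonneg p) fun p hp ↦
          eulerFactor_le_mul_exp (Nat.two_le_of_mem_primesLE hp) hσ0
    _ = (∏ p ∈ n.primesLE, (1 - ((p : ℝ) ^ (1 + σ))⁻¹)⁻¹) *
          exp (2 * σ * ∑ p ∈ n.primesLE, log p / p) := by
        rw [prod_mul_distrib, mul_sum, exp_sum]
    _ ≤ (1 + log n) * exp 4 := by gcongr
    _ ≤ 3 * exp 4 * log n := by nlinarith [exp_pos 4]

theorem eulerFactor_pow_le {p s : ℕ} (hp : 2 ≤ p) (hs : s < p) :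
    eulerFactor p ^ s ≤ 1 + 4 * s / p := by
  have hp' : (2 : ℝ) ≤ p := by exact_mod_cast hp
  have hs' : (s : ℝ) + 1 ≤ p := by exact_mod_cast hs
  have hp1 : (0 : ℝ) < p - 1 := by linarith
  set t : ℝ := s * (1 / (p - 1)) with ht
  have ht0 : 0 ≤ t := by positivity
  have ht1 : t ≤ 1 := by rw [ht, mul_one_div, div_le_one hp1]; linarith
  have hexp : exp t ≤ 1 + 2 * t := by
    have := abs_exp_sub_one_le (abs_le.2 ⟨by linarith, ht1⟩)
    rw [abs_of_nonneg ht0] at this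
    linarith [le_abs_self (exp t - 1)]
  calc eulerFactor p ^ s ≤ exp (1 / (p - 1)) ^ s := by
        gcongr
        · exact eulerFactor_nonneg p
        · rw [eulerFactor_eq_one_add hp, add_comm]
          exact add_one_le_exp _
    _ = exp t := by rw [ht, exp_nat_mul]
    _ ≤ 1 + 2 * t := hexp
    _ ≤ 1 + 4 * s / p := by
      rw [add_le_add_iff_left, ht, mul_one_div, mul_div, div_le_div_iff₀ hp1 (by linarith)]
      nlinarith [(Nat.cast_nonneg s : (0 : ℝ) ≤ s)]

theorem div_totient_eq_prod_eulerFactor {n : ℕ} (hn : n ≠ 0) :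
    (n : ℝ) / n.totient = ∏ p ∈ n.primeFactors, eulerFactor p := by
  have htotient : (n.totient : ℝ) = n * ∏ p ∈ n.primeFactors, (1 - (p : ℝ)⁻¹) := by
    have := congrArg (Rat.cast : ℚ → ℝ) (Nat.totient_eq_mul_prod_factors n)
    push_cast at this
    exact this
  simp only [eulerFactor]
  rw [htotient, prod_inv_distrib, div_mul_cancel_left₀ (Nat.cast_ne_zero.2 hn)]

theorem pow_succ_div_totient_pow_succ (a k : ℕ) :
    ((a ^ (k + 1) : ℕ) : ℝ) / (a ^ (k + 1)).totient = a / a.totient := by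
  rcases eq_or_ne a 0 with rfl | ha
  · simp
  rw [div_totient_eq_prod_eulerFactor (pow_ne_zero _ ha), Nat.primeFactors_pow a k.succ_ne_zero,
    div_totient_eq_prod_eulerFactor ha]

theorem mul_div_totient_mul_le (m n : ℕ) :
    ((m * n : ℕ) : ℝ) / (m * n).totient ≤ m / m.totient * (n / n.totient) := by
  rcases eq_or_ne m 0 with rfl | hm
  · simp
  rcases eq_or_ne n 0 with rfl | hn
  · simp
  rw [div_mul_div_comm, Nat.cast_mul, ← Nat.cast_mul m.totient]
  refine div_le_div_of_nonneg_left (by positivity) ?_ ?_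
  · simp [Nat.pos_of_ne_zero hm, Nat.pos_of_ne_zero hn]
  · exact_mod_cast Nat.totient_super_multiplicative m n

theorem pow_succ_mul_div_totient_le (a k n : ℕ) :
    ((a ^ (k + 1) * n : ℕ) : ℝ) / (a ^ (k + 1) * n).totient ≤ a / a.totient * (n / n.totient) := by
  rw [← pow_succ_div_totient_pow_succ a k]
  exact mul_div_totient_mul_le _ _

theorem card_primeFactors_mul_log_two_le {n : ℕ} (hn : n ≠ 0) :
    #n.primeFactors * log 2 ≤ log n := by
  have hpow : 2 ^ #n.primeFactors ≤ n :=
    calc 2 ^ #n.primeFactors ≤ ∏ p ∈ n.primeFactors, p :=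
          pow_card_le_prod _ _ _ fun p hp ↦ (Nat.prime_of_mem_primeFactors hp).two_le
      _ ≤ n := Nat.le_of_dvd (Nat.pos_of_ne_zero hn) n.prod_primeFactors_dvd
  rw [← log_pow]
  gcongr
  exact_mod_cast hpow

theorem prod_eulerFactor_le_exp_card_div {S : Finset ℕ} {z : ℕ} (hz : 0 < z)
    (hS : ∀ p ∈ S, z < p) : ∏ p ∈ S, eulerFactor p ≤ exp (#S / z) := by
  have hfactor : ∀ p ∈ S, eulerFactor p ≤ exp (1 / z) := by
    intro p hp
    have hzp : (z : ℝ) ≤ p - 1 := by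
      have : (z : ℝ) + 1 ≤ p := by exact_mod_cast hS p hp
      linarith
    calc eulerFactor p = 1 / ((p : ℝ) - 1) + 1 := by
          rw [eulerFactor_eq_one_add (by have := hS p hp; lia), add_comm]
      _ ≤ 1 / z + 1 := by gcongr
      _ ≤ exp (1 / z) := add_one_le_exp _
  calc ∏ p ∈ S, eulerFactor p ≤ ∏ _p ∈ S, exp (1 / z) :=
        prod_le_prod (fun p _ ↦ eulerFactor_nonneg p) hfactor
    _ = exp (#S / z) := by rw [prod_const, ← exp_nat_mul, mul_one_div]

theorem prod_eulerFactor_primeFactors_gt_le {n z : ℕ} (hn : n ≠ 0) (hz : 0 < z)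
    (hnz : log n ≤ z) : ∏ p ∈ n.primeFactors with z < p, eulerFactor p ≤ exp 2 := by
  refine (prod_eulerFactor_le_exp_card_div hz fun p hp ↦ (mem_filter.1 hp).2).trans ?_
  have hcard : (#{p ∈ n.primeFactors | z < p} : ℝ) ≤ #n.primeFactors := by
    gcongr
    exact filter_subset _ _
  have hlog := card_primeFactors_mul_log_two_le hn
  gcongr
  rw [div_le_iff₀ (by positivity)]
  nlinarith [log_two_gt_d9]

theorem prod_eulerFactor_primeFactors_le_le {n y : ℕ} (hy : 2 ≤ y) (z : ℕ) :
    ∏ p ∈ n.primeFactors with p ≤ z, eulerFactor p ≤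
      3 * exp 4 * log y * ∏ p ∈ Ioc y z with p.Prime ∧ p ∣ n, eulerFactor p := by
  have hdisj : Disjoint y.primesLE {p ∈ Ioc y z | p.Prime ∧ p ∣ n} := by
    refine disjoint_left.2 fun p hpy hpz ↦ ?_
    have := (Nat.mem_primesLE.1 hpy).1
    have := (mem_Ioc.1 (mem_filter.1 hpz).1).1
    lia
  have hsub : {p ∈ n.primeFactors | p ≤ z} ⊆
      y.primesLE ∪ {p ∈ Ioc y z | p.Prime ∧ p ∣ n} := by
    intro p
    simp only [mem_filter, mem_union, Nat.mem_primeFactors, Nat.mem_primesLE, mem_Ioc]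
    grind
  have hone : ∀ p ∈ y.primesLE ∪ {p ∈ Ioc y z | p.Prime ∧ p ∣ n}, 1 ≤ eulerFactor p := by
    intro p hp
    apply one_le_eulerFactor
    rcases mem_union.1 hp with hp | hp
    · exact Nat.two_le_of_mem_primesLE hp
    · exact (mem_filter.1 hp).2.1.two_le
  calc ∏ p ∈ n.primeFactors with p ≤ z, eulerFactor p
      ≤ ∏ p ∈ y.primesLE ∪ {p ∈ Ioc y z | p.Prime ∧ p ∣ n}, eulerFactor p :=
        prod_le_prod_of_subset_of_one_le hsub (fun p _ ↦ eulerFactor_nonneg p)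
          fun p hp _ ↦ hone p hp
    _ = (∏ p ∈ y.primesLE, eulerFactor p) *
          ∏ p ∈ Ioc y z with p.Prime ∧ p ∣ n, eulerFactor p := prod_union hdisj
    _ ≤ 3 * exp 4 * log y * ∏ p ∈ Ioc y z with p.Prime ∧ p ∣ n, eulerFactor p := by
        gcongr
        · exact prod_nonneg fun p _ ↦ eulerFactor_nonneg p
        · exact prod_primesLE_eulerFactor_le hy

theorem div_totient_le_log_mul_prod {n y z : ℕ} (hn : n ≠ 0) (hy : 2 ≤ y) (hz : 0 < z)
    (hnz : log n ≤ z) :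
    (n : ℝ) / n.totient ≤
      3 * exp 6 * log y * ∏ p ∈ Ioc y z with p.Prime ∧ p ∣ n, eulerFactor p := by
  have hmedium : 0 ≤ ∏ p ∈ Ioc y z with p.Prime ∧ p ∣ n, eulerFactor p :=
    prod_nonneg fun p _ ↦ eulerFactor_nonneg p
  calc (n : ℝ) / n.totient
      = (∏ p ∈ n.primeFactors with p ≤ z, eulerFactor p) *
          ∏ p ∈ n.primeFactors with z < p, eulerFactor p := by
        simp only [← not_le]
        rw [div_totient_eq_prod_eulerFactor hn, prod_filter_mul_prod_filter_not]
    _ ≤ (3 * exp 4 * log y * ∏ p ∈ Ioc y z with p.Prime ∧ p ∣ n, eulerFactor p) * exp 2 := by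
        gcongr
        · exact prod_nonneg fun p _ ↦ eulerFactor_nonneg p
        · exact prod_eulerFactor_primeFactors_le_le hy z
        · exact prod_eulerFactor_primeFactors_gt_le hn hz hnz
    _ = 3 * exp 6 * log y * ∏ p ∈ Ioc y z with p.Prime ∧ p ∣ n, eulerFactor p := by
        rw [show (6 : ℝ) = 4 + 2 by norm_num, exp_add]
        ring

theorem div_totient_le_log {n z : ℕ} (hn : n ≠ 0) (hz : 2 ≤ z) (hnz : log n ≤ z) :
    (n : ℝ) / n.totient ≤ 3 * exp 6 * log z := by
  simpa using div_totient_le_log_mul_prod hn hz (by lia) hnz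

theorem div_totient_pow_le {n s y z : ℕ} (hn : n ≠ 0) (hy : 2 ≤ y) (hsy : s ≤ y) (hz : 0 < z)
    (hnz : log n ≤ z) :
    ((n : ℝ) / n.totient) ^ s ≤ (3 * exp 6 * log y) ^ s *
      ∏ p ∈ Ioc y z with p.Prime, (1 + if p ∣ n then 4 * s / (p : ℝ) else 0) := by
  calc ((n : ℝ) / n.totient) ^ s
      ≤ (3 * exp 6 * log y * ∏ p ∈ Ioc y z with p.Prime ∧ p ∣ n, eulerFactor p) ^ s := by
        gcongr
        exact div_totient_le_log_mul_prod hn hy hz hnz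
    _ = (3 * exp 6 * log y) ^ s *
          ∏ p ∈ Ioc y z with p.Prime ∧ p ∣ n, eulerFactor p ^ s := by
        rw [mul_pow, prod_pow]
    _ ≤ (3 * exp 6 * log y) ^ s *
          ∏ p ∈ Ioc y z with p.Prime ∧ p ∣ n, (1 + 4 * s / (p : ℝ)) := by
        gcongr with p hp
        · exact fun p _ ↦ pow_nonneg (eulerFactor_nonneg p) s
        · obtain ⟨hpyz, hpp, -⟩ := mem_filter.1 hp
          exact eulerFactor_pow_le hpp.two_le (hsy.trans_lt (mem_Ioc.1 hpyz).1)
    _ = (3 * exp 6 * log y) ^ s *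
          ∏ p ∈ Ioc y z with p.Prime, (1 + if p ∣ n then 4 * s / (p : ℝ) else 0) := by
        congr 1
        rw [← filter_filter, prod_filter]
        exact prod_congr rfl fun p _ ↦ by split_ifs <;> simp

theorem card_le_div_add_one_of_dvd_sub {S : Finset ℤ} {u v : ℤ} {d : ℕ} (huv : u ≤ v)
    (hd : 0 < d) (hS : S ⊆ Ico u v) (hdvd : ∀ m ∈ S, ∀ m' ∈ S, (d : ℤ) ∣ m - m') :
    (#S : ℝ) ≤ (v - u) / d + 1 := by
  have huv' : (0 : ℝ) ≤ v - u := sub_nonneg.2 (Int.cast_le.2 huv)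
  rcases S.eq_empty_or_nonempty with rfl | ⟨m₀, hm₀⟩
  · simp only [card_empty, Nat.cast_zero]
    positivity
  have hsub : S ⊆ {m ∈ Ico u v | m ≡ m₀ [ZMOD d]} := fun m hm ↦
    mem_filter.2 ⟨hS hm, Int.modEq_iff_dvd.2 (hdvd m₀ hm₀ m hm)⟩
  have hcount : (#S : ℤ) ≤ max (⌈((v : ℚ) - m₀) / d⌉ - ⌈((u : ℚ) - m₀) / d⌉) 0 := by
    have := Int.Ico_filter_modEq_card u v (Int.natCast_pos.2 hd) m₀
    simp only [Int.cast_natCast] at this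
    rw [← this]
    exact_mod_cast card_le_card hsub
  have hdiff : (⌈((v : ℚ) - m₀) / d⌉ : ℚ) - ⌈((u : ℚ) - m₀) / d⌉ ≤ (v - u) / d + 1 := by
    have hv := (Int.ceil_lt_add_one (((v : ℚ) - m₀) / d)).le
    have hu := Int.le_ceil (((u : ℚ) - m₀) / d)
    have hsplit : ((v : ℚ) - u) / d = (v - m₀) / d - (u - m₀) / d := by ring
    linarith
  have hnonneg : (0 : ℚ) ≤ (v - u) / d + 1 := by
    have : (0 : ℚ) ≤ v - u := sub_nonneg.2 (Int.cast_le.2 huv)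
    positivity
  have hcountQ : (#S : ℚ) ≤ (v - u) / d + 1 :=
    calc (#S : ℚ) ≤ max ((⌈((v : ℚ) - m₀) / d⌉ : ℚ) - ⌈((u : ℚ) - m₀) / d⌉) 0 := by
          exact_mod_cast hcount
      _ ≤ (v - u) / d + 1 := max_le hdiff hnonneg
  exact_mod_cast (Rat.cast_le (K := ℝ)).2 hcountQ

theorem prod_one_add_div_sq_le {P : Finset ℕ} {y z : ℕ} (hP : P ⊆ Ioc y z) {A : ℝ}
    (hA : 0 ≤ A) : ∏ p ∈ P, (1 + A / (p : ℝ) ^ 2) ≤ exp (2 * A / (y + 1)) := by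
  have hsum : ∑ p ∈ P, ((p : ℝ) ^ 2)⁻¹ ≤ 2 / (y + 1) := by
    refine le_trans ?_ (sum_Ioo_inv_sq_le (α := ℝ) y (z + 1))
    rw [Ioo_add_one_right_eq_Ioc]
    exact sum_le_sum_of_subset_of_nonneg hP fun p _ _ ↦ by positivity
  calc ∏ p ∈ P, (1 + A / (p : ℝ) ^ 2) ≤ exp (∑ p ∈ P, A / (p : ℝ) ^ 2) :=
        prod_one_add_le_exp_sum P fun p ↦ by positivity
    _ = exp (A * ∑ p ∈ P, ((p : ℝ) ^ 2)⁻¹) := by simp only [mul_sum, div_eq_mul_inv]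
    _ ≤ exp (A * (2 / (y + 1))) := by gcongr
    _ = exp (2 * A / (y + 1)) := by rw [mul_div_assoc', mul_comm A]

theorem prod_one_add_div_le {P : Finset ℕ} {z : ℕ} (hP : P ⊆ Ioc 0 z) {A : ℝ} (hA : 0 ≤ A) :
    ∏ p ∈ P, (1 + A / (p : ℝ)) ≤ exp (A * (1 + log z)) := by
  have hsum : ∑ p ∈ P, (p : ℝ)⁻¹ ≤ 1 + log z := by
    have hharmonic := harmonic_le_one_add_log z
    rw [harmonic_eq_sum_Icc, Rat.cast_sum] at hharmonic
    simp only [Rat.cast_inv, Rat.cast_natCast] at hharmonic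
    exact (sum_le_sum_of_subset_of_nonneg hP fun p _ _ ↦ by positivity).trans hharmonic
  calc ∏ p ∈ P, (1 + A / (p : ℝ)) ≤ exp (∑ p ∈ P, A / (p : ℝ)) :=
        prod_one_add_le_exp_sum P fun p ↦ by positivity
    _ = exp (A * ∑ p ∈ P, (p : ℝ)⁻¹) := by simp only [mul_sum, div_eq_mul_inv]
    _ ≤ exp (A * (1 + log z)) := by gcongr

theorem four_mul_mul_one_add_log_le {δ : ℝ} (hδ : 0 < δ) {k s ℓ : ℕ} (hk : k ≠ 0)
    (hsk : s ≤ k) (hkℓ : k ^ 4 ≤ ℓ) :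
    4 * k * s * (1 + log (k * ℓ)) ≤ δ * ℓ + 20 * (20 / δ) ^ 3 := by
  set w : ℝ := (ℓ : ℝ) ^ (1 / 4 : ℝ) with hw
  have hw0 : 0 ≤ w := by positivity
  have hwℓ : w ^ 4 = ℓ := by
    rw [hw, ← rpow_natCast, ← rpow_mul (by positivity)]
    norm_num
  have hkw : (k : ℝ) ≤ w :=
    le_of_pow_le_pow_left₀ (by norm_num : (4 : ℕ) ≠ 0) hw0 (by rw [hwℓ]; exact_mod_cast hkℓ)
  have hk1 : (1 : ℝ) ≤ k := by exact_mod_cast Nat.one_le_iff_ne_zero.2 hk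
  have hw1 : 1 ≤ w := hk1.trans hkw
  have hlog : 1 + log (k * ℓ) ≤ 5 * w := by
    calc 1 + log (k * ℓ) ≤ 1 + log (w * w ^ 4) := by
          rw [hwℓ]
          have : (0 : ℝ) < ℓ := by rw [← hwℓ]; positivity
          gcongr
      _ = 1 + 5 * log w := by rw [← pow_succ', log_pow]; norm_num
      _ ≤ 5 * w := by linarith [log_le_sub_one_of_pos (by linarith : 0 < w)]
  have hcubic : 20 * w ^ 3 ≤ δ * w ^ 4 + 20 * (20 / δ) ^ 3 := by
    rcases le_total w (20 / δ) with h | h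
    · have : 0 ≤ δ * w ^ 4 := by positivity
      have : w ^ 3 ≤ (20 / δ) ^ 3 := by gcongr
      linarith
    · have : 20 * w ^ 3 ≤ δ * w * w ^ 3 := by
        gcongr
        rwa [mul_comm, ← div_le_iff₀ hδ]
      have : 0 ≤ 20 * (20 / δ) ^ 3 := by positivity
      linarith
  calc 4 * k * s * (1 + log (k * ℓ)) ≤ 4 * w * w * (5 * w) := by
        have : (s : ℝ) ≤ w := (Nat.cast_le.2 hsk).trans hkw
        have : 0 ≤ log (k * ℓ) := by exact_mod_cast log_natCast_nonneg (k * ℓ)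
        gcongr
    _ = 20 * w ^ 3 := by ring
    _ ≤ δ * ℓ + 20 * (20 / δ) ^ 3 := by rw [← hwℓ]; exact hcubic

theorem ceil_log_two_mul_le {L : ℝ} (hL : 1 ≤ L) : (⌈log (2 * L)⌉₊ : ℝ) ≤ log L + 2 := by
  have hlog : log (2 * L) = log 2 + log L := log_mul two_ne_zero (by positivity)
  have hceil := (Nat.ceil_lt_add_one (log_nonneg (by linarith : 1 ≤ 2 * L))).le
  linarith [log_two_lt_d9]

section LinearFactors

variable {ι : Type*} [Fintype ι] {u v : ℤ} {b : ι → ℤ}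

theorem card_filter_forall_dvd_prod_sub_le (b : ι → ℤ) (huv : u ≤ v) {T : Finset ℕ}
    (hT : ∀ p ∈ T, p.Prime) :
    (#{m ∈ Ico u v | ∀ p ∈ T, (p : ℤ) ∣ ∏ i, (m - b i)} : ℝ) ≤
      (Fintype.card ι : ℝ) ^ #T * ((v - u) / (∏ p ∈ T, (p : ℝ)) + 1) := by
  classical
  have hcover : {m ∈ Ico u v | ∀ p ∈ T, (p : ℤ) ∣ ∏ i, (m - b i)} ⊆
      univ.biUnion fun g : T → ι ↦ {m ∈ Ico u v | ∀ p : T, (p : ℤ) ∣ m - b (g p)} := by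
    intro m hm
    obtain ⟨hmuv, hdvd⟩ := mem_filter.1 hm
    have hfactor : ∀ p : T, ∃ i, (p : ℤ) ∣ m - b i := fun p ↦ by
      have hp := Nat.prime_iff_prime_int.1 (hT p p.2)
      simpa using (hp.dvd_finsetProd_iff _).1 (hdvd p p.2)
    choose g hg using hfactor
    exact mem_biUnion.2 ⟨g, mem_univ g, mem_filter.2 ⟨hmuv, hg⟩⟩
  have hclass : ∀ g : T → ι, (#{m ∈ Ico u v | ∀ p : T, (p : ℤ) ∣ m - b (g p)} : ℝ) ≤
      (v - u) / (∏ p ∈ T, (p : ℝ)) + 1 := by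
    intro g
    rw [← Nat.cast_prod]
    refine card_le_div_add_one_of_dvd_sub huv (prod_pos fun p hp ↦ (hT p hp).pos)
      (filter_subset _ _) fun m hm m' hm' ↦ Int.natCast_dvd.2 ?_
    refine Finset.prod_primes_dvd _ (fun p hp ↦ (hT p hp).prime) fun p hp ↦ ?_
    rw [← Int.natCast_dvd]
    simpa using dvd_sub ((mem_filter.1 hm).2 ⟨p, hp⟩) ((mem_filter.1 hm').2 ⟨p, hp⟩)
  calc (#{m ∈ Ico u v | ∀ p ∈ T, (p : ℤ) ∣ ∏ i, (m - b i)} : ℝ)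
      ≤ ∑ g : T → ι, (#{m ∈ Ico u v | ∀ p : T, (p : ℤ) ∣ m - b (g p)} : ℝ) := by
        exact_mod_cast (card_le_card hcover).trans card_biUnion_le
    _ ≤ ∑ _g : T → ι, ((v - u) / (∏ p ∈ T, (p : ℝ)) + 1) := sum_le_sum fun g _ ↦ hclass g
    _ = (Fintype.card ι : ℝ) ^ #T * ((v - u) / (∏ p ∈ T, (p : ℝ)) + 1) := by
        rw [sum_const, card_univ, Fintype.card_fun, Fintype.card_coe, nsmul_eq_mul, Nat.cast_pow]

theorem sum_prod_one_add_ite_dvd_le (b : ι → ℤ) (huv : u ≤ v) {P : Finset ℕ}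
    (hP : ∀ p ∈ P, p.Prime) {c : ℕ → ℝ} (hc : ∀ p, 0 ≤ c p) :
    ∑ m ∈ Ico u v, ∏ p ∈ P, (1 + if (p : ℤ) ∣ ∏ i, (m - b i) then c p else 0) ≤
      (v - u) * ∏ p ∈ P, (1 + Fintype.card ι * c p / p) +
        ∏ p ∈ P, (1 + Fintype.card ι * c p) := by
  simp_rw [prod_one_add, prod_ite_zero]
  rw [sum_comm, mul_sum, ← sum_add_distrib]
  refine sum_le_sum fun T hT ↦ ?_
  have hcount := card_filter_forall_dvd_prod_sub_le b huv fun p hp ↦ hP p (mem_powerset.1 hT hp)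
  calc ∑ m ∈ Ico u v, (if ∀ p ∈ T, (p : ℤ) ∣ ∏ i, (m - b i) then ∏ p ∈ T, c p else 0)
      = #{m ∈ Ico u v | ∀ p ∈ T, (p : ℤ) ∣ ∏ i, (m - b i)} * ∏ p ∈ T, c p := by
        rw [← sum_filter, sum_const, nsmul_eq_mul]
    _ ≤ (Fintype.card ι : ℝ) ^ #T * ((v - u) / (∏ p ∈ T, (p : ℝ)) + 1) * ∏ p ∈ T, c p := by
        gcongr
        exact prod_nonneg fun p _ ↦ hc p
    _ = (v - u) * ∏ p ∈ T, (Fintype.card ι * c p / p) + ∏ p ∈ T, (Fintype.card ι * c p) := by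
        rw [prod_div_distrib, prod_mul_distrib, prod_const]
        ring

theorem natAbs_prod_sub_ne_zero {m : ℤ} (hne : ∀ i, m ≠ b i) :
    (∏ i, (m - b i)).natAbs ≠ 0 :=
  Int.natAbs_ne_zero.2 (prod_ne_zero_iff.2 fun i _ ↦ sub_ne_zero.2 (hne i))

theorem log_natAbs_prod_sub_le {m : ℤ} {L : ℝ} (hm : |(m : ℝ)| ≤ L)
    (hb : ∀ i, |(b i : ℝ)| ≤ L) (hne : ∀ i, m ≠ b i) :
    log (∏ i, (m - b i)).natAbs ≤ Fintype.card ι * log (2 * L) := by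
  have hpos := Nat.pos_of_ne_zero (natAbs_prod_sub_ne_zero hne)
  have hle : ((∏ i, (m - b i)).natAbs : ℝ) ≤ (2 * L) ^ Fintype.card ι := by
    calc ((∏ i, (m - b i)).natAbs : ℝ) = ∏ i, |(m : ℝ) - b i| := by
          rw [Nat.cast_natAbs, Int.cast_abs, Int.cast_prod, abs_prod]
          simp only [Int.cast_sub]
      _ ≤ ∏ _i : ι, 2 * L := by
          gcongr with i
          linarith [abs_sub (m : ℝ) (b i), hb i]
      _ = (2 * L) ^ Fintype.card ι := by rw [prod_const, card_univ]
  rw [← log_pow]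
  gcongr

theorem sum_prod_one_add_ite_dvd_le_exp (b : ι → ℤ) {y : ℕ} (s z : ℕ)
    (hy : Fintype.card ι ≤ y) (huv : u ≤ v) :
    ∑ m ∈ Ico u v, ∏ p ∈ Ioc y z with p.Prime,
        (1 + if (p : ℤ) ∣ ∏ i, (m - b i) then 4 * s / (p : ℝ) else 0) ≤
      (v - u) * exp 8 ^ s + exp (4 * Fintype.card ι * s * (1 + log z)) := by
  set k := Fintype.card ι
  set P := {p ∈ Ioc y z | p.Prime}
  have huv' : (0 : ℝ) ≤ v - u := sub_nonneg.2 (Int.cast_le.2 huv)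
  have hPprime : ∀ p ∈ P, p.Prime := fun p hp ↦ (mem_filter.1 hp).2
  have hPsub : P ⊆ Ioc y z := filter_subset _ _
  have hmain : ∏ p ∈ P, (1 + k * (4 * s / (p : ℝ)) / p) ≤ exp 8 ^ s := by
    calc ∏ p ∈ P, (1 + k * (4 * s / (p : ℝ)) / p)
        = ∏ p ∈ P, (1 + (4 * k * s : ℝ) / (p : ℝ) ^ 2) :=
          prod_congr rfl fun p _ ↦ by ring
      _ ≤ exp (2 * (4 * k * s) / (y + 1)) := prod_one_add_div_sq_le hPsub (by positivity)
      _ ≤ exp (s * 8) := by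
        have hky : (k : ℝ) ≤ y + 1 := by exact_mod_cast hy.trans y.le_succ
        gcongr
        rw [div_le_iff₀ (by positivity)]
        nlinarith [(Nat.cast_nonneg s : (0 : ℝ) ≤ s)]
      _ = exp 8 ^ s := exp_nat_mul 8 s
  have herror : ∏ p ∈ P, (1 + k * (4 * s / (p : ℝ))) ≤ exp (4 * k * s * (1 + log z)) := by
    calc ∏ p ∈ P, (1 + k * (4 * s / (p : ℝ)))
        = ∏ p ∈ P, (1 + (4 * k * s : ℝ) / (p : ℝ)) := prod_congr rfl fun p _ ↦ by ring
      _ ≤ exp (4 * k * s * (1 + log z)) :=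
        prod_one_add_div_le (hPsub.trans (Ioc_subset_Ioc_left y.zero_le)) (by positivity)
  refine (sum_prod_one_add_ite_dvd_le b huv hPprime fun p ↦ by positivity).trans ?_
  gcongr

theorem sum_div_totient_pow_le_of_log_le [DecidablePred fun m ↦ ∀ i, m ≠ b i] {s y z : ℕ}
    (hy : 2 ≤ y) (hky : Fintype.card ι ≤ y) (hsy : s ≤ y) (hz : 0 < z) (huv : u ≤ v)
    (hlog : ∀ m ∈ Ico u v, (∀ i, m ≠ b i) → log (∏ i, (m - b i)).natAbs ≤ z) :
    ∑ m ∈ Ico u v with ∀ i, m ≠ b i,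
        (((∏ i, (m - b i)).natAbs : ℝ) / (∏ i, (m - b i)).natAbs.totient) ^ s ≤
      (3 * exp 6 * log y) ^ s *
        ((v - u) * exp 8 ^ s + exp (4 * Fintype.card ι * s * (1 + log z))) := by
  have hpointwise : ∀ m ∈ Ico u v, (∀ i, m ≠ b i) →
      (((∏ i, (m - b i)).natAbs : ℝ) / (∏ i, (m - b i)).natAbs.totient) ^ s ≤
        (3 * exp 6 * log y) ^ s * ∏ p ∈ Ioc y z with p.Prime,
          (1 + if (p : ℤ) ∣ ∏ i, (m - b i) then 4 * s / (p : ℝ) else 0) := by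
    intro m hm hne
    simp only [Int.natCast_dvd]
    exact div_totient_pow_le (natAbs_prod_sub_ne_zero hne) hy hsy hz (hlog m hm hne)
  calc ∑ m ∈ Ico u v with ∀ i, m ≠ b i,
        (((∏ i, (m - b i)).natAbs : ℝ) / (∏ i, (m - b i)).natAbs.totient) ^ s
      ≤ ∑ m ∈ Ico u v with ∀ i, m ≠ b i, (3 * exp 6 * log y) ^ s *
          ∏ p ∈ Ioc y z with p.Prime,
            (1 + if (p : ℤ) ∣ ∏ i, (m - b i) then 4 * s / (p : ℝ) else 0) :=
        sum_le_sum fun m hm ↦ hpointwise m (mem_filter.1 hm).1 (mem_filter.1 hm).2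
    _ ≤ ∑ m ∈ Ico u v, (3 * exp 6 * log y) ^ s * ∏ p ∈ Ioc y z with p.Prime,
          (1 + if (p : ℤ) ∣ ∏ i, (m - b i) then 4 * s / (p : ℝ) else 0) := by
        refine sum_le_sum_of_subset_of_nonneg (filter_subset _ _) fun m _ _ ↦ ?_
        exact mul_nonneg (by positivity) (prod_nonneg fun p _ ↦ by positivity)
    _ ≤ (3 * exp 6 * log y) ^ s *
          ((v - u) * exp 8 ^ s + exp (4 * Fintype.card ι * s * (1 + log z))) := by
        rw [← mul_sum]
        gcongr
        exact sum_prod_one_add_ite_dvd_le_exp b s z hky huv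

theorem sum_div_totient_pow_le_of_log_le_pow [DecidablePred fun m ↦ ∀ i, m ≠ b i] {s z e : ℕ}
    (hz : 2 ≤ z) (he : e ≠ 0) (huv : u ≤ v)
    (hlog : ∀ m ∈ Ico u v, (∀ i, m ≠ b i) → log (∏ i, (m - b i)).natAbs ≤ (z : ℝ) ^ e) :
    ∑ m ∈ Ico u v with ∀ i, m ≠ b i,
        (((∏ i, (m - b i)).natAbs : ℝ) / (∏ i, (m - b i)).natAbs.totient) ^ s ≤
      (3 * e * exp 6 * log z) ^ s * (v - u) := by
  have hpointwise : ∀ m ∈ Ico u v, (∀ i, m ≠ b i) →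
      ((∏ i, (m - b i)).natAbs : ℝ) / (∏ i, (m - b i)).natAbs.totient ≤
        3 * e * exp 6 * log z := by
    intro m hm hne
    calc ((∏ i, (m - b i)).natAbs : ℝ) / (∏ i, (m - b i)).natAbs.totient
        ≤ 3 * exp 6 * log (z ^ e : ℕ) :=
          div_totient_le_log (natAbs_prod_sub_ne_zero hne) (hz.trans (Nat.le_self_pow he z))
            (by exact_mod_cast hlog m hm hne)
      _ = 3 * e * exp 6 * log z := by rw [Nat.cast_pow, log_pow]; ring
  calc ∑ m ∈ Ico u v with ∀ i, m ≠ b i,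
        (((∏ i, (m - b i)).natAbs : ℝ) / (∏ i, (m - b i)).natAbs.totient) ^ s
      ≤ ∑ m ∈ Ico u v with ∀ i, m ≠ b i, (3 * e * exp 6 * log z) ^ s := by
        refine sum_le_sum fun m hm ↦ ?_
        obtain ⟨hmuv, hne⟩ := mem_filter.1 hm
        gcongr
        exact hpointwise m hmuv hne
    _ ≤ ∑ m ∈ Ico u v, (3 * e * exp 6 * log z) ^ s :=
        sum_le_sum_of_subset_of_nonneg (filter_subset _ _) fun m _ _ ↦ by positivity
    _ = (3 * e * exp 6 * log z) ^ s * (v - u) := by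
        have hcard : ((#(Ico u v) : ℕ) : ℝ) = v - u := by
          exact_mod_cast congrArg (Int.cast : ℤ → ℝ) (Int.card_Ico_of_le u v huv)
        rw [sum_const, nsmul_eq_mul, hcard, mul_comm]

theorem sum_div_totient_pow_le_of_card_pow_four_le
    [DecidablePred fun m ↦ ∀ i, m ≠ b i] {s ℓ : ℕ} {δ D : ℝ}
    (hk : 2 ≤ Fintype.card ι) (hs : s ≠ 0)
    (hsk : s ≤ Fintype.card ι) (hkℓ : Fintype.card ι ^ 4 ≤ ℓ) (hδ : 0 < δ) (hD : 1 ≤ D)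
    (huv : u ≤ v) (hδℓ : exp (δ * ℓ) ≤ D * (v - u))
    (hlog : ∀ m ∈ Ico u v, (∀ i, m ≠ b i) →
      log (∏ i, (m - b i)).natAbs ≤ Fintype.card ι * ℓ) :
    ∑ m ∈ Ico u v with ∀ i, m ≠ b i,
        (((∏ i, (m - b i)).natAbs : ℝ) / (∏ i, (m - b i)).natAbs.totient) ^ s ≤
      (3 * exp 6 * (exp 8 + D * exp (20 * (20 / δ) ^ 3)) * log (Fintype.card ι)) ^ s *
        (v - u) := by
  set k := Fintype.card ι
  set E := D * exp (20 * (20 / δ) ^ 3) with hE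
  have hvu : (0 : ℝ) ≤ v - u := sub_nonneg.2 (Int.cast_le.2 huv)
  have hE1 : 1 ≤ E := one_le_mul_of_one_le_of_one_le hD (one_le_exp (by positivity))
  have hℓ : 0 < ℓ := (pow_pos (by lia : 0 < k) 4).trans_le hkℓ
  have herror : exp (4 * k * s * (1 + log (k * ℓ))) ≤ (v - u) * E ^ s := by
    calc exp (4 * k * s * (1 + log (k * ℓ))) ≤ exp (δ * ℓ + 20 * (20 / δ) ^ 3) := by
          gcongr
          exact four_mul_mul_one_add_log_le hδ (by lia) hsk hkℓ
      _ ≤ D * (v - u) * exp (20 * (20 / δ) ^ 3) := by rw [exp_add]; gcongr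
      _ = (v - u) * E := by rw [hE]; ring
      _ ≤ (v - u) * E ^ s := by gcongr; exact le_self_pow₀ hE1 hs
  calc ∑ m ∈ Ico u v with ∀ i, m ≠ b i,
        (((∏ i, (m - b i)).natAbs : ℝ) / (∏ i, (m - b i)).natAbs.totient) ^ s
      ≤ (3 * exp 6 * log k) ^ s *
          ((v - u) * exp 8 ^ s + exp (4 * k * s * (1 + log (k * ℓ)))) := by
        rw [← Nat.cast_mul]
        exact sum_div_totient_pow_le_of_log_le hk le_rfl hsk (Nat.mul_pos (by lia) hℓ) huv
          (by exact_mod_cast hlog)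
    _ ≤ (3 * exp 6 * log k) ^ s * ((v - u) * exp 8 ^ s + (v - u) * E ^ s) := by gcongr
    _ ≤ (3 * exp 6 * log k) ^ s * ((v - u) * (exp 8 + E) ^ s) := by
        rw [← mul_add]
        gcongr
        exact pow_add_pow_le (exp_pos 8).le (by positivity) hs
    _ = (3 * exp 6 * (exp 8 + E) * log k) ^ s * (v - u) := by
        rw [mul_right_comm (3 * exp 6), mul_pow _ (exp 8 + E)]
        ring

end LinearFactors

theorem exists_sum_div_totient_pow_le {δ : ℝ} (hδ : 0 < δ) :
    ∃ c : ℝ, 0 < c ∧ ∀ (k : ℕ) (b : Fin k → ℤ) (s : ℕ) (u v : ℤ) (L : ℝ), 2 ≤ k → s ≠ 0 →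
      1 ≤ L → L ^ δ ≤ v - u → (∀ i, |(b i : ℝ)| ≤ L) → (∀ m ∈ Ico u v, |(m : ℝ)| ≤ L) →
      (log L ≤ k ∨ s ≤ k) →
      ∑ m ∈ Ico u v with ∀ i, m ≠ b i,
          (((∏ i, (m - b i)).natAbs : ℝ) / (∏ i, (m - b i)).natAbs.totient) ^ s ≤
        (c * log k) ^ s * (v - u) := by
  refine ⟨3 * exp 6 * (exp 8 + exp (2 * δ) * exp (20 * (20 / δ) ^ 3)), by positivity,
    fun k b s u v L hk hs hL hLuv hb hm hor ↦ ?_⟩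
  have hvu : (0 : ℝ) ≤ v - u := le_trans (by positivity) hLuv
  have huv : u ≤ v := Int.cast_le.1 (sub_nonneg.1 hvu)
  set ℓ := ⌈log (2 * L)⌉₊
  have hℓL : (ℓ : ℝ) ≤ log L + 2 := ceil_log_two_mul_le hL
  have hlog : ∀ m ∈ Ico u v, (∀ i, m ≠ b i) →
      log (∏ i, (m - b i)).natAbs ≤ Fintype.card (Fin k) * ℓ := fun m hmuv hne ↦
    (log_natAbs_prod_sub_le (hm m hmuv) hb hne).trans (by gcongr; exact Nat.le_ceil _)
  rcases le_or_gt ℓ (k ^ 4) with hℓk | hℓk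
  · have hlog_pow : ∀ m ∈ Ico u v, (∀ i, m ≠ b i) →
        log (∏ i, (m - b i)).natAbs ≤ (k : ℝ) ^ 5 := fun m hmuv hne ↦
      (hlog m hmuv hne).trans (by
        rw [Fintype.card_fin]
        exact_mod_cast (by nlinarith : k * ℓ ≤ k ^ 5))
    refine (sum_div_totient_pow_le_of_log_le_pow hk (by norm_num) huv hlog_pow).trans ?_
    have hconst : 5 ≤ exp 8 + exp (2 * δ) * exp (20 * (20 / δ) ^ 3) := by
      linarith [add_one_le_exp 8, mul_pos (exp_pos (2 * δ)) (exp_pos (20 * (20 / δ) ^ 3))]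
    rw [Nat.cast_ofNat, mul_right_comm 3 5]
    gcongr
  · have hsk : s ≤ k := by
      refine hor.resolve_left fun hLk ↦ ?_
      have hℓk' : ℓ ≤ k + 2 := by
        have : (ℓ : ℝ) ≤ k + 2 := by linarith
        exact_mod_cast this
      have : k + 2 ≤ k ^ 4 := by nlinarith [Nat.pow_le_pow_left hk 3]
      lia
    have hδℓ : exp (δ * ℓ) ≤ exp (2 * δ) * (v - u) := by
      calc exp (δ * ℓ) ≤ exp (δ * (log L + 2)) := by gcongr
        _ = exp (2 * δ) * L ^ δ := by
          rw [rpow_def_of_pos (by positivity), ← exp_add]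
          ring_nf
        _ ≤ exp (2 * δ) * (v - u) := by gcongr
    simpa using sum_div_totient_pow_le_of_card_pow_four_le (by simpa using hk) hs
      (by simpa using hsk) (by simpa using hℓk.le) hδ (one_le_exp (by positivity)) huv hδℓ hlog

theorem sum_totient_ratio_linear_pow_le_log_k_general {δ : ℝ} (hδ : 0 < δ) :
    ∃ c : ℝ, 0 < c ∧
      ∀ (k : ℕ) (b : Fin k → ℤ), ∀ a : ℕ, 0 < a → ∀ s : ℕ, 0 < s → 2 ≤ k →
      ∀ x : ℝ, 3 ≤ x → ∀ η : ℝ, log x ^ (δ - 1) ≤ η → η ≤ 1 →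
      (∀ i : Fin k, |(b i : ℝ)| ≤ log x) →
      (log (log x) ≤ k ∨ s ≤ k) →
      ∑ m ∈ Icc (-⌊η * log x⌋) ⌊η * log x⌋ with ∀ i, m ≠ b i,
          (((a ^ (k + 1) * (∏ i, (m - b i)).natAbs : ℕ) : ℝ) /
            (Nat.totient (a ^ (k + 1) * (∏ i, (m - b i)).natAbs) : ℝ)) ^ s ≤
        (c * ((a : ℝ) / (Nat.totient a : ℝ)) * log k) ^ s * (η * log x) := by
  obtain ⟨c, hc, hsum⟩ := exists_sum_div_totient_pow_le hδ
  refine ⟨3 * c, by positivity, fun k b a _ s hs hk x hx η hη hη1 hb hor ↦ ?_⟩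
  set L := log x
  have hL : 1 ≤ L := (le_log_iff_exp_le (by linarith)).2 (by linarith [exp_one_lt_d9])
  have hHL : η * L ≤ L := mul_le_of_le_one_left (by linarith) hη1
  have hLH : L ^ δ ≤ η * L := by
    calc L ^ δ = L ^ (δ - 1) * L := by rw [rpow_sub_one (by positivity)]; field_simp
      _ ≤ η * L := by gcongr
  have hH : 1 ≤ η * L := (one_le_rpow hL hδ.le).trans hLH
  set N := ⌊η * L⌋
  have hN : (N : ℝ) ≤ η * L := Int.floor_le _
  have hN' : η * L < N + 1 := Int.lt_floor_add_one _
  rw [← Ico_add_one_right_eq_Icc]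
  calc ∑ m ∈ Ico (-N) (N + 1) with ∀ i, m ≠ b i,
          (((a ^ (k + 1) * (∏ i, (m - b i)).natAbs : ℕ) : ℝ) /
            (Nat.totient (a ^ (k + 1) * (∏ i, (m - b i)).natAbs) : ℝ)) ^ s
      ≤ ∑ m ∈ Ico (-N) (N + 1) with ∀ i, m ≠ b i, (a / a.totient : ℝ) ^ s *
          (((∏ i, (m - b i)).natAbs : ℝ) / (∏ i, (m - b i)).natAbs.totient) ^ s := by
        gcongr with m
        rw [← mul_pow]
        gcongr
        exact pow_succ_mul_div_totient_le _ _ _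
    _ ≤ (a / a.totient : ℝ) ^ s * ((c * log k) ^ s * (((N + 1 : ℤ) : ℝ) - (-N : ℤ))) := by
        rw [← mul_sum]
        gcongr
        refine hsum k b s (-N) (N + 1) L hk hs.ne' hL ?_ hb (fun m hm ↦ ?_) hor
        · push_cast
          linarith
        · have hm' : |m| ≤ N := abs_le.2 (by rw [mem_Ico] at hm; lia)
          have : |(m : ℝ)| ≤ N := by exact_mod_cast hm'
          linarith
    _ ≤ (a / a.totient : ℝ) ^ s * ((c * log k) ^ s * (3 ^ s * (η * L))) := by
        have h3 : (3 : ℝ) ≤ 3 ^ s := le_self_pow₀ (by norm_num) hs.ne'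
        gcongr
        push_cast
        nlinarith
    _ = (3 * c * (a / a.totient) * log k) ^ s * (η * L) := by
        simp only [mul_pow]
        ring

/-- Theorem (Radomskii, Theorem 4, part 1): for distinct integers `b₁, …, b_k`, `a ∈ ℕ`,
`k ≥ 2`, `x ≥ 3`, `(log x)^{-9/10} ≤ η ≤ 1`, `|b_i| ≤ log x`, and `f(b) = (b-b₁)⋯(b-b_k)`:
if `k ≥ log log x` or `s ≤ k`, then
`∑_{|b| ≤ η log x, b ≠ b_i} (a^{k+1}|f(b)|/φ(a^{k+1}|f(b)|))^s ≤ (c (a/φ(a)) log k)^s η log x`. -/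
theorem sum_totient_ratio_linear_pow_le_log_k :
    ∃ c : ℝ, 0 < c ∧
      ∀ (k : ℕ) (b : Fin k → ℤ), Function.Injective b →
      ∀ a : ℕ, 0 < a → ∀ s : ℕ, 0 < s → 2 ≤ k →
      ∀ x : ℝ, 3 ≤ x → ∀ η : ℝ, Real.log x ^ (-(9 : ℝ) / 10) ≤ η → η ≤ 1 →
      (∀ i : Fin k, |(b i : ℝ)| ≤ Real.log x) →
      (Real.log (Real.log x) ≤ k ∨ s ≤ k) →
      ∑ m ∈ (Finset.Icc (-⌊η * Real.log x⌋) ⌊η * Real.log x⌋).filter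
          (fun m : ℤ => ∀ i : Fin k, m ≠ b i),
          (((a ^ (k + 1) * (∏ i : Fin k, (m - b i)).natAbs : ℕ) : ℝ) /
            (Nat.totient (a ^ (k + 1) * (∏ i : Fin k, (m - b i)).natAbs) : ℝ)) ^ s ≤
        (c * ((a : ℝ) / (Nat.totient a : ℝ)) * Real.log k) ^ s * (η * Real.log x) := by
  rw [show (-(9 : ℝ) / 10) = 1 / 10 - 1 by norm_num]
  exact (sum_totient_ratio_linear_pow_le_log_k_general (by norm_num)).imp
    fun c ⟨hc, h⟩ ↦ ⟨hc, fun k b _ ↦ h k b⟩
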